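/- For every p > 0 there exists a constant C_p > 0 such that for all probability measures ν₀, ν₁ on ℝ^d: 𝒯_p(ν₀, ν₁) ≤ C_p ∑_{n≥0} 2^{pn} ∑_{ℓ≥0} 2^{−pℓ} ∑_{F ∈ 𝒫_ℓ} | ν₀(2ⁿF ∩ B_n) − ν₁(2ⁿF ∩ B_n) |. -/

import Mathlib

open MeasureTheory Filter ENNReal Topology

noncomputable section

/-- The optimal transport cost `𝒯_p(ν₀, ν₁) = inf_{π ∈ 𝒞(ν₀,ν₁)} ∫ |x-y|^p dπ(x,y)`. -/
def Tcost {d : ℕ} (p : ℝ) (ν₀ ν₁ : Measure (EuclideanSpace ℝ (Fin d))) : ℝ≥0∞ :=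
  ⨅ (π : Measure (EuclideanSpace ℝ (Fin d) × EuclideanSpace ℝ (Fin d)))
    (_ : π.map Prod.fst = ν₀) (_ : π.map Prod.snd = ν₁),
      ∫⁻ z, ENNReal.ofReal (‖z.1 - z.2‖ ^ p) ∂π

/-- The cube of the natural partition `𝒫_ℓ` of `(-1,1]^d` into `2^{dℓ}` dyadic cubes of
side-length `2·2^{-ℓ}`, indexed by `k : Fin d → Fin (2^ℓ)`. -/
def dyadicCube (d ℓ : ℕ) (k : Fin d → Fin (2 ^ ℓ)) : Set (EuclideanSpace ℝ (Fin d)) :=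
  {x | ∀ i, x i ∈ Set.Ioc ((-1 : ℝ) + 2 * (2 : ℝ) ^ (-(ℓ : ℝ)) * (k i : ℝ))
      ((-1 : ℝ) + 2 * (2 : ℝ) ^ (-(ℓ : ℝ)) * ((k i : ℝ) + 1))}

/-- The sets `B₀ = (-1,1]^d` and `B_n = (-2ⁿ,2ⁿ]^d \ (-2^{n-1},2^{n-1}]^d` for `n ≥ 1`. -/
def annulus (d n : ℕ) : Set (EuclideanSpace ℝ (Fin d)) :=
  if n = 0 then {x | ∀ i, x i ∈ Set.Ioc (-1 : ℝ) 1}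
  else {x | ∀ i, x i ∈ Set.Ioc (-((2 : ℝ) ^ n)) ((2 : ℝ) ^ n)} \
    {x | ∀ i, x i ∈ Set.Ioc (-((2 : ℝ) ^ (n - 1))) ((2 : ℝ) ^ (n - 1))}

/-- The scaled set `c F = {c x : x ∈ F}`. -/
def scaleSet {d : ℕ} (c : ℝ) (F : Set (EuclideanSpace ℝ (Fin d))) :
    Set (EuclideanSpace ℝ (Fin d)) :=
  (fun x => c • x) '' F

/-- `π` transports part of `μ` to part of `ν` inside the fibres of `f`, leaving the residuals
`μ'` and `ν'`, at most one of which charges any given fibre. -/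
structure IsGreedyCoupling {X I : Type*} [MeasurableSpace X] (f : X → I)
    (μ ν μ' ν' : Measure X) (π : Measure (X × X)) : Prop where
  fst_add : π.map Prod.fst + μ' = μ
  snd_add : π.map Prod.snd + ν' = ν
  agree : ∀ᵐ z ∂π, f z.1 = f z.2
  left_residual : ∀ i, μ' (f ⁻¹' {i}) = μ (f ⁻¹' {i}) - ν (f ⁻¹' {i})
  right_residual : ∀ i, ν' (f ⁻¹' {i}) = ν (f ⁻¹' {i}) - μ (f ⁻¹' {i})

section Greedy

variable {X I : Type*} [MeasurableSpace X]

theorem one_sub_inv_max_mul_mul {a b : ℝ≥0∞} (ha : a ≠ ∞) (hb : b ≠ ∞) :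
    (1 - (max a b)⁻¹ * b) * a = a - b := by
  rcases le_total a b with h | h
  · rw [max_eq_right h, tsub_eq_zero_of_le h]
    rcases eq_or_ne b 0 with rfl | h0
    · simp [nonpos_iff_eq_zero.1 h]
    · simp [ENNReal.inv_mul_cancel h0 hb]
  · rw [max_eq_left h]
    rcases eq_or_ne a 0 with rfl | h0
    · simp
    · rw [ENNReal.sub_mul (by simp [ha]), one_mul, mul_right_comm, ENNReal.inv_mul_cancel h0 ha,
        one_mul]

theorem lintegral_le_mul_of_agree {c : X × X → ℝ≥0∞} {f : X → I} {D : ℝ≥0∞}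
    (hc : ∀ x y, f x = f y → c (x, y) ≤ D) {π : Measure (X × X)}
    (h : ∀ᵐ z ∂π, f z.1 = f z.2) :
    ∫⁻ z, c z ∂π ≤ D * π Set.univ := by
  rw [← lintegral_const]
  exact lintegral_mono_ae (h.mono fun z hz => hc _ _ hz)

variable [MeasurableSpace I] [MeasurableSingletonClass I]

theorem sum_smul_restrict_fibre_apply (μ : Measure X) {f : X → I} (hf : Measurable f)
    (w : I → ℝ≥0∞) (j : I) :
    Measure.sum (fun i => w i • μ.restrict (f ⁻¹' {i})) (f ⁻¹' {j}) = w j * μ (f ⁻¹' {j}) := by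
  have hm : ∀ i, MeasurableSet (f ⁻¹' {i}) := fun i => hf (measurableSet_singleton i)
  rw [Measure.sum_apply _ (hm j), tsum_eq_single j]
  · simp
  · intro i hi
    rw [Measure.smul_apply, Measure.restrict_apply (hm j),
      (pairwise_disjoint_fiber f hi.symm).inter_eq, measure_empty, smul_zero]

variable [Countable I]

theorem sum_restrict_fibre (μ : Measure X) {f : X → I} (hf : Measurable f) :
    Measure.sum (fun i => μ.restrict (f ⁻¹' {i})) = μ := by
  rw [← Measure.restrict_iUnion (pairwise_disjoint_fiber f)
    (fun i => hf (measurableSet_singleton i)), ← Set.preimage_iUnion,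
    Set.iUnion_of_singleton, Set.preimage_univ, Measure.restrict_univ]

theorem sum_smul_restrict_fibre_add (μ : Measure X) {f : X → I} (hf : Measurable f)
    {w : I → ℝ≥0∞} (hw : ∀ i, w i ≤ 1) :
    Measure.sum (fun i => w i • μ.restrict (f ⁻¹' {i})) +
      Measure.sum (fun i => (1 - w i) • μ.restrict (f ⁻¹' {i})) = μ := by
  rw [Measure.sum_add_sum]
  conv_rhs => rw [← sum_restrict_fibre μ hf]
  congr 1
  ext1 i
  rw [← add_smul, add_tsub_cancel_of_le (hw i), one_smul]

theorem exists_isGreedyCoupling (μ ν : Measure X) [IsFiniteMeasure μ] [IsFiniteMeasure ν]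
    {f : X → I} (hf : Measurable f) :
    ∃ (μ' ν' : Measure X) (π : Measure (X × X)), IsGreedyCoupling f μ ν μ' ν' π := by
  have hm : ∀ i, MeasurableSet (f ⁻¹' {i}) := fun i => hf (measurableSet_singleton i)
  set a : I → ℝ≥0∞ := fun i => μ (f ⁻¹' {i})
  set b : I → ℝ≥0∞ := fun i => ν (f ⁻¹' {i})
  refine ⟨Measure.sum (fun i => (1 - (max (a i) (b i))⁻¹ * b i) • μ.restrict (f ⁻¹' {i})),
    Measure.sum (fun i => (1 - (max (b i) (a i))⁻¹ * a i) • ν.restrict (f ⁻¹' {i})),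
    Measure.sum (fun i => (max (a i) (b i))⁻¹ •
      (μ.restrict (f ⁻¹' {i})).prod (ν.restrict (f ⁻¹' {i}))), ?_, ?_, ?_, ?_, ?_⟩
  · rw [Measure.map_sum measurable_fst.aemeasurable]
    simp only [Measure.map_smul, Measure.map_fst_prod, smul_smul, Measure.restrict_apply_univ]
    exact sum_smul_restrict_fibre_add μ hf fun i => by
      rw [mul_comm, ← div_eq_mul_inv]
      exact ENNReal.div_le_of_le_mul (by simp [b])
  · rw [Measure.map_sum measurable_snd.aemeasurable]
    simp only [Measure.map_smul, Measure.map_snd_prod, smul_smul, Measure.restrict_apply_univ,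
      max_comm (b _)]
    exact sum_smul_restrict_fibre_add ν hf fun i => by
      rw [mul_comm, ← div_eq_mul_inv]
      exact ENNReal.div_le_of_le_mul (by simp [a])
  · rw [ae_iff, Measure.sum_apply_of_countable, ENNReal.tsum_eq_zero]
    intro i
    rw [← ae_iff (p := fun z : X × X => f z.1 = f z.2)]
    refine Measure.ae_smul_measure ?_ _
    rw [Measure.prod_restrict]
    filter_upwards [ae_restrict_mem ((hm i).prod (hm i))] with z hz
    exact (Set.mem_singleton_iff.1 hz.1).trans (Set.mem_singleton_iff.1 hz.2).symm
  · intro i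
    rw [sum_smul_restrict_fibre_apply μ hf]
    exact one_sub_inv_max_mul_mul (measure_ne_top _ _) (measure_ne_top _ _)
  · intro i
    rw [sum_smul_restrict_fibre_apply ν hf]
    exact one_sub_inv_max_mul_mul (measure_ne_top _ _) (measure_ne_top _ _)

theorem measure_univ_eq_tsum_fibre (μ : Measure X) {f : X → I} (hf : Measurable f) :
    μ Set.univ = ∑' i, μ (f ⁻¹' {i}) := by
  conv_lhs => rw [← sum_restrict_fibre μ hf, Measure.sum_apply _ MeasurableSet.univ]
  simp

/-- Couple greedily inside the fibres of `f L`, then of `f (L - 1)`, and so on down to `f 0`. -/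
theorem exists_isGreedyCoupling_lintegral_le {c : X × X → ℝ≥0∞} (L : ℕ) :
    ∀ (f : ℕ → X → I) (_ : ∀ ℓ, Measurable (f ℓ))
      (_ : ∀ ℓ x y, f (ℓ + 1) x = f (ℓ + 1) y → f ℓ x = f ℓ y)
      (D : ℕ → ℝ≥0∞) (_ : ∀ ℓ x y, f ℓ x = f ℓ y → c (x, y) ≤ D ℓ)
      (μ ν : Measure X) [IsFiniteMeasure μ] [IsFiniteMeasure ν],
      ∃ (μ' ν' : Measure X) (π : Measure (X × X)), IsGreedyCoupling (f 0) μ ν μ' ν' π ∧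
        ∫⁻ z, c z ∂π ≤ D L * μ Set.univ +
          ∑ ℓ ∈ Finset.range L, D ℓ *
            ∑' i, (μ (f (ℓ + 1) ⁻¹' {i}) - ν (f (ℓ + 1) ⁻¹' {i})) := by
  induction L with
  | zero =>
    intro f hf _ D hD μ ν _ _
    obtain ⟨μ', ν', π, h⟩ := exists_isGreedyCoupling μ ν (hf 0)
    refine ⟨μ', ν', π, h, (lintegral_le_mul_of_agree (hD 0) h.agree).trans ?_⟩
    rw [Finset.range_zero, Finset.sum_empty, add_zero]
    gcongr
    conv_rhs => rw [← h.fst_add]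
    rw [Measure.add_apply, Measure.map_apply measurable_fst MeasurableSet.univ]
    exact le_self_add
  | succ L ih =>
    intro f hf hnest D hD μ ν _ _
    obtain ⟨μ', ν', π, h, hcost⟩ := ih (fun ℓ => f (ℓ + 1)) (fun ℓ => hf _)
      (fun ℓ => hnest _) (fun ℓ => D (ℓ + 1)) (fun ℓ => hD _) μ ν
    have hμ' : μ' ≤ μ := h.fst_add ▸ Measure.le_add_left le_rfl
    have hν' : ν' ≤ ν := h.snd_add ▸ Measure.le_add_left le_rfl
    have := isFiniteMeasure_of_le μ hμ'
    have := isFiniteMeasure_of_le ν hν'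
    obtain ⟨μ'', ν'', π', h'⟩ := exists_isGreedyCoupling μ' ν' (hf 0)
    have hagree : ∀ᵐ z ∂π, f 0 z.1 = f 0 z.2 := h.agree.mono fun z hz => hnest _ _ _ hz
    have hfst (i : I) : μ (f 0 ⁻¹' {i}) = π (Prod.fst ⁻¹' (f 0 ⁻¹' {i})) + μ' (f 0 ⁻¹' {i}) := by
      conv_lhs => rw [← h.fst_add, Measure.add_apply,
        Measure.map_apply measurable_fst (hf 0 (measurableSet_singleton i))]
    have hsnd (i : I) : ν (f 0 ⁻¹' {i}) = π (Prod.fst ⁻¹' (f 0 ⁻¹' {i})) + ν' (f 0 ⁻¹' {i}) := by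
      conv_lhs => rw [← h.snd_add, Measure.add_apply,
        Measure.map_apply measurable_snd (hf 0 (measurableSet_singleton i))]
      congr 1
      refine measure_congr (hagree.mono fun z hz => ?_)
      change (f 0 z.2 = i) = (f 0 z.1 = i)
      rw [hz]
    have hfin (i : I) : π (Prod.fst ⁻¹' (f 0 ⁻¹' {i})) ≠ ∞ :=
      ne_top_of_le_ne_top (measure_ne_top μ (f 0 ⁻¹' {i})) (by rw [hfst]; exact le_self_add)
    refine ⟨μ'', ν'', π + π', ⟨?_, ?_, ?_, ?_, ?_⟩, ?_⟩
    · rw [Measure.map_add _ _ measurable_fst, add_assoc, h'.fst_add, h.fst_add]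
    · rw [Measure.map_add _ _ measurable_snd, add_assoc, h'.snd_add, h.snd_add]
    · exact ae_add_measure_iff.2 ⟨hagree, h'.agree⟩
    · intro i
      rw [h'.left_residual, hfst, hsnd, ENNReal.add_sub_add_eq_sub_left (hfin i)]
    · intro i
      rw [h'.right_residual, hfst, hsnd, ENNReal.add_sub_add_eq_sub_left (hfin i)]
    · rw [lintegral_add_measure, Finset.sum_range_succ', ← add_assoc]
      refine add_le_add hcost ((lintegral_le_mul_of_agree (hD 0) h'.agree).trans ?_)
      gcongr
      simp_rw [zero_add, ← h.left_residual]
      rw [← measure_univ_eq_tsum_fibre μ' (hf _), ← h'.fst_add, Measure.add_apply,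
        Measure.map_apply measurable_fst MeasurableSet.univ]
      exact le_self_add

end Greedy

theorem exists_coupling_lintegral_le {X : Type*} [MeasurableSpace X] (μ ν : Measure X)
    [IsFiniteMeasure μ] [IsFiniteMeasure ν] (h : μ Set.univ = ν Set.univ)
    {c : X × X → ℝ≥0∞} {g : X → ℝ≥0∞} (hg : Measurable g) (hc : ∀ x y, c (x, y) ≤ g x + g y) :
    ∃ π : Measure (X × X), π.map Prod.fst = μ ∧ π.map Prod.snd = ν ∧
      ∫⁻ z, c z ∂π ≤ ∫⁻ x, g x ∂μ + ∫⁻ x, g x ∂ν := by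
  obtain ⟨π, h1, h2⟩ :
      ∃ π : Measure (X × X), π.map Prod.fst = μ ∧ π.map Prod.snd = ν := by
    rcases eq_or_ne (μ Set.univ) 0 with h0 | h0
    · refine ⟨0, ?_, ?_⟩
      · rw [Measure.map_zero, Measure.measure_univ_eq_zero.1 h0]
      · rw [Measure.map_zero, Measure.measure_univ_eq_zero.1 (h.symm.trans h0)]
    · refine ⟨(μ Set.univ)⁻¹ • μ.prod ν, ?_, ?_⟩
      · rw [Measure.map_smul, Measure.map_fst_prod, smul_smul, ← h,
          ENNReal.inv_mul_cancel h0 (measure_ne_top _ _), one_smul]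
      · rw [Measure.map_smul, Measure.map_snd_prod, smul_smul,
          ENNReal.inv_mul_cancel h0 (measure_ne_top _ _), one_smul]
  refine ⟨π, h1, h2, ?_⟩
  calc ∫⁻ z, c z ∂π ≤ ∫⁻ z, g z.1 + g z.2 ∂π := lintegral_mono fun z => hc z.1 z.2
    _ = ∫⁻ x, g x ∂μ + ∫⁻ x, g x ∂ν := by
      rw [lintegral_add_left (f := fun z : X × X => g z.1) (hg.comp measurable_fst),
        ← lintegral_map hg measurable_fst, ← lintegral_map hg measurable_snd, h1, h2]

section Cells

variable {d : ℕ}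

/-- The cube `(-2ⁿ, 2ⁿ]^d`. -/
def box (d n : ℕ) : Set (EuclideanSpace ℝ (Fin d)) :=
  {x | ∀ i, x i ∈ Set.Ioc (-((2 : ℝ) ^ n)) ((2 : ℝ) ^ n)}

/-- The index of the dyadic cube of generation `ℓ`, scaled by `2ⁿ`, that contains `x`. -/
def cellIndex (d n ℓ : ℕ) (x : EuclideanSpace ℝ (Fin d)) : Fin d → ℤ :=
  fun i => ⌈(x i / 2 ^ n + 1) * 2 ^ ℓ / 2⌉ - 1

theorem measurableSet_box (n : ℕ) : MeasurableSet (box d n) := by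
  have : box d n = ⋂ i, (fun x : EuclideanSpace ℝ (Fin d) => x i) ⁻¹'
      Set.Ioc (-((2 : ℝ) ^ n)) ((2 : ℝ) ^ n) := by
    ext; simp [box]
  rw [this]
  exact MeasurableSet.iInter fun i => measurableSet_Ioc.preimage (by fun_prop)

theorem monotone_box : Monotone (box d) := by
  intro m n hmn x hx i
  have h : (2 : ℝ) ^ m ≤ 2 ^ n := pow_le_pow_right₀ one_le_two hmn
  exact ⟨(neg_le_neg h).trans_lt (hx i).1, (hx i).2.trans h⟩

theorem iUnion_box : ⋃ n, box d n = Set.univ := by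
  refine Set.eq_univ_of_forall fun x => Set.mem_iUnion.2 ?_
  obtain ⟨n, hn⟩ := pow_unbounded_of_one_lt ‖x‖ (one_lt_two (α := ℝ))
  refine ⟨n, fun i => ?_⟩
  have := abs_lt.1 ((PiLp.norm_apply_le x i).trans_lt hn)
  exact ⟨this.1, this.2.le⟩

theorem annulus_eq_disjointed : annulus d = disjointed (box d) := by
  funext n
  cases n with
  | zero => simp [annulus, box]
  | succ n =>
    rw [← Order.succ_eq_add_one, monotone_box.disjointed_succ (not_isMax n)]
    simp [annulus, box]

theorem measurableSet_annulus (n : ℕ) : MeasurableSet (annulus d n) := by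
  rw [annulus_eq_disjointed]
  exact MeasurableSet.disjointed measurableSet_box n

theorem annulus_subset_box (n : ℕ) : annulus d n ⊆ box d n := by
  rw [annulus_eq_disjointed]
  exact disjointed_le _ n

theorem sum_restrict_annulus (ν : Measure (EuclideanSpace ℝ (Fin d))) :
    Measure.sum (fun n => ν.restrict (annulus d n)) = ν := by
  rw [← Measure.restrict_iUnion _ measurableSet_annulus, annulus_eq_disjointed,
    iUnion_disjointed, iUnion_box, Measure.restrict_univ]
  rw [annulus_eq_disjointed]
  exact disjoint_disjointed _

theorem measurable_cellIndex (n ℓ : ℕ) : Measurable (cellIndex d n ℓ) := by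
  refine measurable_pi_lambda _ fun i => ?_
  exact (Int.measurable_ceil.comp (by fun_prop)).sub_const 1

theorem cellIndex_eq_of_succ (n ℓ : ℕ) (x y : EuclideanSpace ℝ (Fin d))
    (h : cellIndex d n (ℓ + 1) x = cellIndex d n (ℓ + 1) y) :
    cellIndex d n ℓ x = cellIndex d n ℓ y := by
  have key : ∀ u v : ℝ, ⌈2 * u⌉ = ⌈2 * v⌉ → ⌈u⌉ ≤ ⌈v⌉ := by
    intro u v huv
    have h1 : ⌈2 * v⌉ ≤ 2 * ⌈v⌉ := Int.ceil_le.2 (by push_cast; linarith [Int.le_ceil v])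
    have h2 : 2 * u ≤ ((2 * ⌈v⌉ : ℤ) : ℝ) := Int.ceil_le.1 (huv ▸ h1)
    refine Int.ceil_le.2 ?_
    push_cast at h2
    linarith
  funext i
  have hi := sub_left_injective (congrFun h i)
  have e (z : EuclideanSpace ℝ (Fin d)) : (z i / 2 ^ n + 1) * 2 ^ (ℓ + 1) / 2 =
      2 * ((z i / 2 ^ n + 1) * 2 ^ ℓ / 2) := by ring
  simp only [e] at hi
  simp only [cellIndex]
  rw [le_antisymm (key _ _ hi) (key _ _ hi.symm)]

theorem scaleSet_dyadicCube (n ℓ : ℕ) (k : Fin d → Fin (2 ^ ℓ)) :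
    scaleSet ((2 : ℝ) ^ n) (dyadicCube d ℓ k) =
      cellIndex d n ℓ ⁻¹' {fun i => ((k i : ℕ) : ℤ)} := by
  have h2 : (0 : ℝ) < 2 ^ n := by positivity
  ext x
  have h1 : x ∈ scaleSet ((2 : ℝ) ^ n) (dyadicCube d ℓ k) ↔
      ((2 : ℝ) ^ n)⁻¹ • x ∈ dyadicCube d ℓ k :=
    Set.mem_smul_set_iff_inv_smul_mem₀ h2.ne' _ x
  rw [h1, Set.mem_preimage, Set.mem_singleton_iff, funext_iff]
  refine forall_congr' fun i => ?_
  have h3 : (0 : ℝ) < 2 ^ ℓ := by positivity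
  have h4 : (2 : ℝ) ^ (-(ℓ : ℝ)) = (2 ^ ℓ)⁻¹ := by
    rw [Real.rpow_neg zero_le_two, Real.rpow_natCast]
  have e : (((2 : ℝ) ^ n)⁻¹ • x) i = x i / 2 ^ n := by
    rw [PiLp.smul_apply, smul_eq_mul, inv_mul_eq_div]
  rw [e, h4, cellIndex, sub_eq_iff_eq_add, Int.ceil_eq_iff, Set.mem_Ioc]
  push_cast
  have e1 (u : ℝ) : -1 + 2 * ((2 : ℝ) ^ ℓ)⁻¹ * u = 2 * u / 2 ^ ℓ - 1 := by field_simp; ring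
  rw [e1, e1, sub_lt_iff_lt_add, div_lt_iff₀ h3, le_sub_iff_add_le, le_div_iff₀ h3]
  constructor <;> rintro ⟨_, _⟩ <;> constructor <;> linarith

theorem exists_cellIndex_eq {n ℓ : ℕ} {x : EuclideanSpace ℝ (Fin d)} (hx : x ∈ box d n) :
    ∃ k : Fin d → Fin (2 ^ ℓ), cellIndex d n ℓ x = fun i => ((k i : ℕ) : ℤ) := by
  have h2 : (0 : ℝ) < 2 ^ n := by positivity
  have h3 : (0 : ℝ) < 2 ^ ℓ := by positivity
  have h (i : Fin d) : 0 ≤ cellIndex d n ℓ x i ∧ cellIndex d n ℓ x i < 2 ^ ℓ := by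
    have hl : 0 < x i / 2 ^ n + 1 := by
      rw [← neg_lt_iff_pos_add, lt_div_iff₀ h2]
      linarith [(hx i).1]
    have hr : x i / 2 ^ n ≤ 1 := (div_le_one h2).2 (hx i).2
    constructor
    · have : 0 < ⌈(x i / 2 ^ n + 1) * 2 ^ ℓ / 2⌉ := Int.ceil_pos.2 (by positivity)
      simp only [cellIndex]
      omega
    · refine Int.sub_one_lt_iff.2 (Int.ceil_le.2 ?_)
      push_cast
      nlinarith
  refine ⟨fun i => ⟨(cellIndex d n ℓ x i).toNat, ?_⟩, ?_⟩
  · have := (h i).2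
    zify
    rw [Int.toNat_of_nonneg (h i).1]
    exact this
  · funext i
    exact (Int.toNat_of_nonneg (h i).1).symm

theorem norm_le_sqrt_mul {x : EuclideanSpace ℝ (Fin d)} {r : ℝ} (hr : 0 ≤ r)
    (h : ∀ i, |x i| ≤ r) : ‖x‖ ≤ √d * r := by
  rw [EuclideanSpace.norm_eq]
  refine Real.sqrt_le_iff.2 ⟨by positivity, ?_⟩
  rw [mul_pow, Real.sq_sqrt (Nat.cast_nonneg d)]
  calc ∑ i, ‖x i‖ ^ 2 ≤ ∑ _i : Fin d, r ^ 2 :=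
        Finset.sum_le_sum fun i _ => pow_le_pow_left₀ (norm_nonneg _) (h i) 2
    _ = d * r ^ 2 := by simp

theorem norm_sub_le_of_cellIndex_eq {n ℓ : ℕ} {x y : EuclideanSpace ℝ (Fin d)}
    (h : cellIndex d n ℓ x = cellIndex d n ℓ y) : ‖x - y‖ ≤ √d * (2 * 2 ^ n / 2 ^ ℓ) := by
  refine norm_le_sqrt_mul (by positivity) fun i => ?_
  have hi := sub_left_injective (congrFun h i)
  have h1 := Int.abs_sub_lt_one_of_floor_eq_floor (R := ℝ)
    (a := -((x i / 2 ^ n + 1) * 2 ^ ℓ / 2)) (b := -((y i / 2 ^ n + 1) * 2 ^ ℓ / 2))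
    (by rw [Int.floor_neg, Int.floor_neg]; exact congrArg _ hi)
  have h2 : (x - y) i = (-((y i / 2 ^ n + 1) * 2 ^ ℓ / 2) - -((x i / 2 ^ n + 1) * 2 ^ ℓ / 2)) *
      (2 * 2 ^ n / 2 ^ ℓ) := by
    rw [PiLp.sub_apply]
    field_simp
    ring
  rw [abs_sub_comm] at h1
  rw [h2, abs_mul, abs_of_nonneg (a := 2 * (2 : ℝ) ^ n / 2 ^ ℓ) (by positivity)]
  exact mul_le_of_le_one_left (by positivity) h1.le

/-- The sum `∑_{F ∈ 𝒫_ℓ} |ν₀(2ⁿF ∩ B_n) - ν₁(2ⁿF ∩ B_n)|`. -/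
def cellDiscrepancy (ν₀ ν₁ : Measure (EuclideanSpace ℝ (Fin d))) (n ℓ : ℕ) : ℝ≥0∞ :=
  ∑ k : Fin d → Fin (2 ^ ℓ),
    ENNReal.ofReal
      |(ν₀ (scaleSet ((2:ℝ) ^ n) (dyadicCube d ℓ k) ∩ annulus d n)).toReal -
       (ν₁ (scaleSet ((2:ℝ) ^ n) (dyadicCube d ℓ k) ∩ annulus d n)).toReal|

theorem cellDiscrepancy_comm (ν₀ ν₁ : Measure (EuclideanSpace ℝ (Fin d))) (n ℓ : ℕ) :
    cellDiscrepancy ν₀ ν₁ n ℓ = cellDiscrepancy ν₁ ν₀ n ℓ := by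
  simp only [cellDiscrepancy, abs_sub_comm]

theorem tsub_le_ofReal_abs_toReal_sub {a b : ℝ≥0∞} (ha : a ≠ ∞) (hb : b ≠ ∞) :
    a - b ≤ ENNReal.ofReal |a.toReal - b.toReal| := by
  conv_lhs => rw [← ENNReal.ofReal_toReal ha, ← ENNReal.ofReal_toReal hb,
    ← ENNReal.ofReal_sub _ ENNReal.toReal_nonneg]
  exact ENNReal.ofReal_le_ofReal (le_abs_self _)

theorem tsum_cellIndex_tsub_le (ν₀ ν₁ : Measure (EuclideanSpace ℝ (Fin d)))
    [IsFiniteMeasure ν₀] [IsFiniteMeasure ν₁] (n ℓ : ℕ) :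
    ∑' i, (ν₀.restrict (annulus d n) (cellIndex d n ℓ ⁻¹' {i}) -
      ν₁.restrict (annulus d n) (cellIndex d n ℓ ⁻¹' {i})) ≤ cellDiscrepancy ν₀ ν₁ n ℓ := by
  have hinj : Function.Injective fun (k : Fin d → Fin (2 ^ ℓ)) (i : Fin d) => ((k i : ℕ) : ℤ) :=
    fun k k' h => funext fun i => Fin.ext (Int.ofNat_injective (congrFun h i))
  rw [← hinj.tsum_eq, tsum_fintype]
  · refine Finset.sum_le_sum fun k _ => ?_
    rw [← scaleSet_dyadicCube, Measure.restrict_apply' (measurableSet_annulus n),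
      Measure.restrict_apply' (measurableSet_annulus n)]
    exact tsub_le_ofReal_abs_toReal_sub (measure_ne_top _ _) (measure_ne_top _ _)
  · intro i hi
    by_contra hk
    refine hi ?_
    suffices h : cellIndex d n ℓ ⁻¹' {i} ∩ annulus d n = ∅ by
      beta_reduce
      rw [Measure.restrict_apply' (measurableSet_annulus n), h, measure_empty, zero_tsub]
    refine Set.eq_empty_of_forall_notMem fun x ⟨hx, hxn⟩ => hk ?_
    obtain ⟨k, hxk⟩ := exists_cellIndex_eq (ℓ := ℓ) (annulus_subset_box n hxn)
    exact ⟨k, hxk.symm.trans hx⟩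

theorem rpow_sqrt_mul_scale (p : ℝ) (n ℓ : ℕ) :
    (√d * (2 * 2 ^ n / 2 ^ ℓ)) ^ p =
      (2 * √d) ^ p * (2 : ℝ) ^ (p * n) * (2 : ℝ) ^ (-(p * ℓ)) := by
  have e : √d * (2 * 2 ^ n / 2 ^ ℓ) = (2 * √d) * (2 ^ n / 2 ^ ℓ) := by ring
  rw [e, Real.mul_rpow (by positivity) (by positivity),
    Real.div_rpow (by positivity) (by positivity), Real.rpow_neg zero_le_two, mul_comm p n,
    mul_comm p ℓ, Real.rpow_natCast_mul zero_le_two, Real.rpow_natCast_mul zero_le_two]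
  ring

theorem cost_le_of_cellIndex_eq {p : ℝ} (hp : 0 < p) {n ℓ : ℕ}
    {x y : EuclideanSpace ℝ (Fin d)} (h : cellIndex d n ℓ x = cellIndex d n ℓ y) :
    ENNReal.ofReal (‖x - y‖ ^ p) ≤
      ENNReal.ofReal ((2 * √d) ^ p) * ENNReal.ofReal ((2 : ℝ) ^ (p * n)) *
        ENNReal.ofReal ((2 : ℝ) ^ (-(p * ℓ))) := by
  rw [← ENNReal.ofReal_mul (by positivity), ← ENNReal.ofReal_mul (by positivity),
    ← rpow_sqrt_mul_scale]
  exact ENNReal.ofReal_le_ofReal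
    (Real.rpow_le_rpow (norm_nonneg _) (norm_sub_le_of_cellIndex_eq h) hp.le)

theorem norm_sub_rpow_le {E : Type*} [SeminormedAddCommGroup E] {p : ℝ} (hp : 0 < p) (x y : E) :
    ‖x - y‖ ^ p ≤ 2 ^ p * ‖x‖ ^ p + 2 ^ p * ‖y‖ ^ p := by
  wlog hxy : ‖y‖ ≤ ‖x‖ generalizing x y
  · rw [norm_sub_rev, add_comm]
    exact this y x (le_of_not_ge hxy)
  have h1 : ‖x - y‖ ≤ 2 * ‖x‖ := (norm_sub_le x y).trans (by linarith)
  have h2 := Real.rpow_le_rpow (norm_nonneg _) h1 hp.le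
  rw [Real.mul_rpow zero_le_two (norm_nonneg _)] at h2
  have : 0 ≤ 2 ^ p * ‖y‖ ^ p := by positivity
  linarith

/-- The weighted sum `2^{pn} ∑_ℓ 2^{-pℓ} ∑_{F ∈ 𝒫_ℓ} |ν₀(2ⁿF ∩ B_n) - ν₁(2ⁿF ∩ B_n)|`. -/
def annulusDiscrepancy (p : ℝ) (ν₀ ν₁ : Measure (EuclideanSpace ℝ (Fin d))) (n : ℕ) : ℝ≥0∞ :=
  ENNReal.ofReal ((2 : ℝ) ^ (p * n)) *
    ∑' ℓ : ℕ, ENNReal.ofReal ((2 : ℝ) ^ (-(p * ℓ))) * cellDiscrepancy ν₀ ν₁ n ℓ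

theorem annulusDiscrepancy_comm (p : ℝ) (ν₀ ν₁ : Measure (EuclideanSpace ℝ (Fin d))) (n : ℕ) :
    annulusDiscrepancy p ν₀ ν₁ n = annulusDiscrepancy p ν₁ ν₀ n := by
  simp only [annulusDiscrepancy, cellDiscrepancy_comm ν₀ ν₁]

theorem cellDiscrepancy_zero_le (p : ℝ) (ν₀ ν₁ : Measure (EuclideanSpace ℝ (Fin d))) (n : ℕ) :
    ENNReal.ofReal ((2 : ℝ) ^ (p * n)) * cellDiscrepancy ν₀ ν₁ n 0 ≤
      annulusDiscrepancy p ν₀ ν₁ n := by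
  unfold annulusDiscrepancy
  gcongr
  refine le_trans (by simp) (ENNReal.le_tsum 0)

theorem exists_isGreedyCoupling_annulus {p : ℝ} (hp : 0 < p)
    (ν₀ ν₁ : Measure (EuclideanSpace ℝ (Fin d))) [IsFiniteMeasure ν₀] [IsFiniteMeasure ν₁]
    (L n : ℕ) :
    ∃ (μ' ν' : Measure (EuclideanSpace ℝ (Fin d)))
      (π : Measure (EuclideanSpace ℝ (Fin d) × EuclideanSpace ℝ (Fin d))),
      IsGreedyCoupling (cellIndex d n 0) (ν₀.restrict (annulus d n))
        (ν₁.restrict (annulus d n)) μ' ν' π ∧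
      ∫⁻ z, ENNReal.ofReal (‖z.1 - z.2‖ ^ p) ∂π ≤
        ENNReal.ofReal ((2 * √d) ^ p) * ENNReal.ofReal ((2 : ℝ) ^ (-(p * L))) *
          ν₀ (annulus d n) +
        ENNReal.ofReal ((2 * √d) ^ p) * ENNReal.ofReal (2 ^ p) *
          annulusDiscrepancy p ν₀ ν₁ n := by
  obtain ⟨μ', ν', π, h, hcost⟩ := exists_isGreedyCoupling_lintegral_le
    (c := fun z : EuclideanSpace ℝ (Fin d) × EuclideanSpace ℝ (Fin d) =>
      ENNReal.ofReal (‖z.1 - z.2‖ ^ p)) (n + L)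
    (cellIndex d n) (measurable_cellIndex n) (cellIndex_eq_of_succ n) _
    (fun ℓ x y hxy => cost_le_of_cellIndex_eq hp hxy)
    (ν₀.restrict (annulus d n)) (ν₁.restrict (annulus d n))
  refine ⟨μ', ν', π, h, hcost.trans (add_le_add (le_of_eq ?_) ?_)⟩
  · rw [Measure.restrict_apply_univ, mul_assoc (ENNReal.ofReal _),
      ← ENNReal.ofReal_mul (by positivity), ← Real.rpow_add two_pos]
    congr 4
    push_cast
    ring
  · calc _ ≤ ∑ ℓ ∈ Finset.range (n + L), ENNReal.ofReal ((2 * √d) ^ p) *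
          ENNReal.ofReal (2 ^ p) * (ENNReal.ofReal ((2 : ℝ) ^ (p * n)) *
            (ENNReal.ofReal ((2 : ℝ) ^ (-(p * (ℓ + 1 : ℕ)))) *
              cellDiscrepancy ν₀ ν₁ n (ℓ + 1))) := by
          refine Finset.sum_le_sum fun ℓ _ => ?_
          have e : ENNReal.ofReal ((2 : ℝ) ^ (-(p * ℓ))) = ENNReal.ofReal (2 ^ p) *
              ENNReal.ofReal ((2 : ℝ) ^ (-(p * (ℓ + 1 : ℕ)))) := by
            rw [← ENNReal.ofReal_mul (by positivity), ← Real.rpow_add two_pos]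
            congr 2
            push_cast
            ring
          rw [e]
          refine (mul_le_mul_right (tsum_cellIndex_tsub_le ν₀ ν₁ n (ℓ + 1)) _).trans
            (le_of_eq ?_)
          ring
      _ ≤ _ := by
          rw [← Finset.mul_sum, ← Finset.mul_sum]
          unfold annulusDiscrepancy
          gcongr
          exact (ENNReal.sum_le_tsum _).trans
            (ENNReal.tsum_comp_le_tsum_of_injective (add_left_injective 1) fun ℓ : ℕ =>
              ENNReal.ofReal ((2 : ℝ) ^ (-(p * ℓ))) * cellDiscrepancy ν₀ ν₁ n ℓ)

theorem lintegral_norm_rpow_residual_le {p : ℝ} (hp : 0 < p)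
    (ν₀ ν₁ : Measure (EuclideanSpace ℝ (Fin d))) [IsFiniteMeasure ν₀] [IsFiniteMeasure ν₁]
    (n : ℕ) {μ' : Measure (EuclideanSpace ℝ (Fin d))} (hle : μ' ≤ ν₀.restrict (annulus d n))
    (hres : ∀ i, μ' (cellIndex d n 0 ⁻¹' {i}) =
      ν₀.restrict (annulus d n) (cellIndex d n 0 ⁻¹' {i}) -
        ν₁.restrict (annulus d n) (cellIndex d n 0 ⁻¹' {i})) :
    ∫⁻ x, ENNReal.ofReal (2 ^ p * ‖x‖ ^ p) ∂μ' ≤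
      ENNReal.ofReal ((2 * √d) ^ p) * annulusDiscrepancy p ν₀ ν₁ n := by
  have hmass : μ' Set.univ ≤ cellDiscrepancy ν₀ ν₁ n 0 := by
    rw [measure_univ_eq_tsum_fibre μ' (measurable_cellIndex n 0)]
    simp_rw [hres]
    exact tsum_cellIndex_tsub_le ν₀ ν₁ n 0
  have hbound : ∀ᵐ x ∂μ', ENNReal.ofReal (2 ^ p * ‖x‖ ^ p) ≤
      ENNReal.ofReal ((2 * √d) ^ p) * ENNReal.ofReal ((2 : ℝ) ^ (p * n)) := by
    refine (Measure.absolutelyContinuous_of_le hle).ae_le ?_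
    filter_upwards [ae_restrict_mem (measurableSet_annulus n)] with x hx
    have hnorm : ‖x‖ ≤ √d * 2 ^ n := norm_le_sqrt_mul (by positivity) fun i =>
      abs_le.2 ⟨(annulus_subset_box n hx i).1.le, (annulus_subset_box n hx i).2⟩
    rw [← ENNReal.ofReal_mul (by positivity), ← Real.mul_rpow zero_le_two (norm_nonneg _)]
    refine ENNReal.ofReal_le_ofReal ?_
    rw [mul_comm p n, Real.rpow_natCast_mul zero_le_two,
      ← Real.mul_rpow (by positivity) (by positivity)]
    exact Real.rpow_le_rpow (by positivity) (by linarith) hp.le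
  calc ∫⁻ x, ENNReal.ofReal (2 ^ p * ‖x‖ ^ p) ∂μ'
      ≤ ENNReal.ofReal ((2 * √d) ^ p) * ENNReal.ofReal ((2 : ℝ) ^ (p * n)) * μ' Set.univ := by
        rw [← lintegral_const]
        exact lintegral_mono_ae hbound
    _ ≤ ENNReal.ofReal ((2 * √d) ^ p) *
        (ENNReal.ofReal ((2 : ℝ) ^ (p * n)) * cellDiscrepancy ν₀ ν₁ n 0) := by
        rw [mul_assoc]
        gcongr
    _ ≤ _ := by
        gcongr
        exact cellDiscrepancy_zero_le p ν₀ ν₁ n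

theorem Tcost_le_add {p : ℝ} (hp : 0 < p) (ν₀ ν₁ : Measure (EuclideanSpace ℝ (Fin d)))
    [IsProbabilityMeasure ν₀] [IsProbabilityMeasure ν₁] (L : ℕ) :
    Tcost p ν₀ ν₁ ≤
      ENNReal.ofReal ((2 * √d) ^ p) * ENNReal.ofReal ((2 : ℝ) ^ (-(p * L))) +
        ENNReal.ofReal ((2 * √d) ^ p) * (ENNReal.ofReal (2 ^ p) + 2) *
          ∑' n, annulusDiscrepancy p ν₀ ν₁ n := by
  choose μ' ν' π h hcost using exists_isGreedyCoupling_annulus hp ν₀ ν₁ L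
  have hfst : (Measure.sum π).map Prod.fst + Measure.sum μ' = ν₀ := by
    rw [Measure.map_sum measurable_fst.aemeasurable, Measure.sum_add_sum]
    simp_rw [(h _).fst_add]
    exact sum_restrict_annulus ν₀
  have hsnd : (Measure.sum π).map Prod.snd + Measure.sum ν' = ν₁ := by
    rw [Measure.map_sum measurable_snd.aemeasurable, Measure.sum_add_sum]
    simp_rw [(h _).snd_add]
    exact sum_restrict_annulus ν₁
  have := isFiniteMeasure_of_le ν₀ (hfst ▸ Measure.le_add_left le_rfl : Measure.sum μ' ≤ ν₀)
  have := isFiniteMeasure_of_le ν₁ (hsnd ▸ Measure.le_add_left le_rfl : Measure.sum ν' ≤ ν₁)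
  have hfst' : Measure.sum π Set.univ + Measure.sum μ' Set.univ = 1 := by
    rw [← measure_univ (μ := ν₀), ← hfst, Measure.add_apply,
      Measure.map_apply measurable_fst MeasurableSet.univ, Set.preimage_univ]
  have hsnd' : Measure.sum π Set.univ + Measure.sum ν' Set.univ = 1 := by
    rw [← measure_univ (μ := ν₁), ← hsnd, Measure.add_apply,
      Measure.map_apply measurable_snd MeasurableSet.univ, Set.preimage_univ]
  have hfin : Measure.sum π Set.univ ≠ ∞ :=
    ne_top_of_le_ne_top one_ne_top (hfst' ▸ le_self_add)
  obtain ⟨ρ, hρ₀, hρ₁, hρ⟩ := exists_coupling_lintegral_le (Measure.sum μ') (Measure.sum ν')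
    ((ENNReal.add_right_inj hfin).1 (hfst'.trans hsnd'.symm))
    (c := fun z => ENNReal.ofReal (‖z.1 - z.2‖ ^ p))
    (g := fun x => ENNReal.ofReal (2 ^ p * ‖x‖ ^ p)) (by fun_prop) (fun x y => by
      rw [← ENNReal.ofReal_add (by positivity) (by positivity)]
      exact ENNReal.ofReal_le_ofReal (norm_sub_rpow_le hp x y))
  have hres₀ : ∫⁻ x, ENNReal.ofReal (2 ^ p * ‖x‖ ^ p) ∂(Measure.sum μ') ≤
      ENNReal.ofReal ((2 * √d) ^ p) * ∑' n, annulusDiscrepancy p ν₀ ν₁ n := by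
    rw [lintegral_sum_measure, ← ENNReal.tsum_mul_left]
    exact ENNReal.tsum_le_tsum fun n => lintegral_norm_rpow_residual_le hp ν₀ ν₁ n
      ((h n).fst_add ▸ Measure.le_add_left le_rfl) (h n).left_residual
  have hres₁ : ∫⁻ x, ENNReal.ofReal (2 ^ p * ‖x‖ ^ p) ∂(Measure.sum ν') ≤
      ENNReal.ofReal ((2 * √d) ^ p) * ∑' n, annulusDiscrepancy p ν₀ ν₁ n := by
    rw [lintegral_sum_measure, ← ENNReal.tsum_mul_left]
    simp_rw [annulusDiscrepancy_comm p ν₀ ν₁]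
    exact ENNReal.tsum_le_tsum fun n => lintegral_norm_rpow_residual_le hp ν₁ ν₀ n
      ((h n).snd_add ▸ Measure.le_add_left le_rfl) (h n).right_residual
  have hmass : ∑' n, ν₀ (annulus d n) = 1 := by
    rw [← measure_univ (μ := ν₀)]
    conv_rhs => rw [← sum_restrict_annulus ν₀, Measure.sum_apply _ MeasurableSet.univ]
    simp
  have hπ : ∫⁻ z, ENNReal.ofReal (‖z.1 - z.2‖ ^ p) ∂(Measure.sum π) ≤
      ENNReal.ofReal ((2 * √d) ^ p) * ENNReal.ofReal ((2 : ℝ) ^ (-(p * L))) +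
        ENNReal.ofReal ((2 * √d) ^ p) * ENNReal.ofReal (2 ^ p) *
          ∑' n, annulusDiscrepancy p ν₀ ν₁ n := by
    rw [lintegral_sum_measure]
    refine (ENNReal.tsum_le_tsum hcost).trans (le_of_eq ?_)
    rw [ENNReal.tsum_add, ENNReal.tsum_mul_left, ENNReal.tsum_mul_left, hmass, mul_one]
  refine iInf_le_of_le (Measure.sum π + ρ) (iInf₂_le_of_le ?_ ?_ ?_)
  · rw [Measure.map_add _ _ measurable_fst, hρ₀, hfst]
  · rw [Measure.map_add _ _ measurable_snd, hρ₁, hsnd]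
  · rw [lintegral_add_measure]
    refine (add_le_add hπ (hρ.trans (add_le_add hres₀ hres₁))).trans (le_of_eq ?_)
    ring

end Cells

/-- **Upper bound for `𝒯_p` (Fournier–Guillin).**  For every `p > 0` there is `C_p > 0`
such that for all probability measures `ν₀, ν₁` on `ℝ^d`,
`𝒯_p(ν₀,ν₁) ≤ C_p ∑_{n≥0} 2^{pn} ∑_{ℓ≥0} 2^{-pℓ} ∑_{F∈𝒫_ℓ} |ν₀(2ⁿF ∩ B_n) - ν₁(2ⁿF ∩ B_n)|`. -/
theorem transport_cost_dyadic_bound {d : ℕ} (p : ℝ) (hp : 0 < p) :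
    ∃ C > (0:ℝ),
      ∀ ν₀ ν₁ : Measure (EuclideanSpace ℝ (Fin d)),
        IsProbabilityMeasure ν₀ → IsProbabilityMeasure ν₁ →
        Tcost p ν₀ ν₁ ≤
          ENNReal.ofReal C *
            ∑' n : ℕ, ENNReal.ofReal ((2 : ℝ) ^ (p * n)) *
              ∑' ℓ : ℕ, ENNReal.ofReal ((2 : ℝ) ^ (-(p * ℓ))) *
                ∑ k : Fin d → Fin (2 ^ ℓ),
                  ENNReal.ofReal
                    |(ν₀ (scaleSet ((2:ℝ) ^ n) (dyadicCube d ℓ k) ∩ annulus d n)).toReal -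
                     (ν₁ (scaleSet ((2:ℝ) ^ n) (dyadicCube d ℓ k) ∩ annulus d n)).toReal| := by
  refine ⟨(2 * √d) ^ p * (2 ^ p + 2) + 1, by positivity, fun ν₀ ν₁ _ _ => ?_⟩
  change Tcost p ν₀ ν₁ ≤ _ * ∑' n, annulusDiscrepancy p ν₀ ν₁ n
  have hlim : Tendsto (fun L : ℕ => ENNReal.ofReal ((2 * √d) ^ p) *
      ENNReal.ofReal ((2 : ℝ) ^ (-(p * L)))) atTop (𝓝 0) := by
    have h1 : Tendsto (fun L : ℕ => (2 : ℝ) ^ (-(p * L))) atTop (𝓝 0) :=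
      (tendsto_rpow_atBot_of_base_gt_one 2 one_lt_two).comp
        (tendsto_neg_atTop_atBot.comp (tendsto_natCast_atTop_atTop.const_mul_atTop hp))
    have h2 := ENNReal.Tendsto.const_mul (a := ENNReal.ofReal ((2 * √d) ^ p))
      (ENNReal.tendsto_ofReal h1) (Or.inr ENNReal.ofReal_ne_top)
    simpa using h2
  have hle := ge_of_tendsto' (hlim.add_const _) (Tcost_le_add hp ν₀ ν₁)
  rw [zero_add] at hle
  refine hle.trans ?_
  gcongr
  rw [← ENNReal.ofReal_ofNat 2, ← ENNReal.ofReal_add (by positivity) zero_le_two,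
    ← ENNReal.ofReal_mul (by positivity)]
  exact ENNReal.ofReal_le_ofReal (by linarith)
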